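/- Let (R,m) be a non-Gorenstein Noetherian local ring with m³ = (0), m² ≠ (0), and residue field k, of type r = dim_k Hom_R(k,R). If there exists a nonfree finitely generated R-module of G-dimension zero, then dim_k m/m² = r + 1 and dim_k m² = r; equivalently the Hilbert series of R is (1+t)(1+rt). -/

import Mathlib

open CategoryTheory

noncomputable abbrev ExtGrp (R : Type) [CommRing R] (M N : Type) [AddCommGroup M] [Module R M]
    [AddCommGroup N] [Module R N] (i : ℕ) : Type :=
  ((Ext R (ModuleCat R) i).obj (Opposite.op (ModuleCat.of R M))).obj (ModuleCat.of R N)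

/-- G-dimension zero. -/
def GDimZero (R : Type) [CommRing R] (M : Type) [AddCommGroup M] [Module R M] : Prop :=
  Function.Bijective (Module.Dual.eval R M) ∧
  (∀ i : ℕ, 0 < i → Subsingleton (ExtGrp R M R i)) ∧
  (∀ i : ℕ, 0 < i → Subsingleton (ExtGrp R (Module.Dual R M) R i))

/-- finite self-injective dimension -/
def HasFiniteSelfInjDim (R : Type) [CommRing R] : Prop :=
  ∃ n : ℕ, ∀ (N : ModuleCat R) (i : ℕ), n < i →
    Subsingleton (((Ext R (ModuleCat R) i).obj (Opposite.op N)).obj (ModuleCat.of R R))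

/-- Gorenstein local ring -/
def IsGorensteinLocalRing (R : Type) [CommRing R] : Prop :=
  IsNoetherianRing R ∧ IsLocalRing R ∧ HasFiniteSelfInjDim R

/-- length of a module, as Krull dimension of its submodule lattice -/
noncomputable def mlength (R : Type) [CommRing R] (M : Type) [AddCommGroup M] [Module R M] :
    WithBot ℕ∞ :=
  Order.krullDim (Submodule R M)

/-- An indecomposable (nonzero) module: it is not a direct sum of two proper submodules. -/
def IsIndecomposableModule (R : Type) [CommRing R] (M : Type) [AddCommGroup M]
    [Module R M] : Prop :=
  (⊥ : Submodule R M) ≠ ⊤ ∧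
    ∀ N₁ N₂ : Submodule R M, IsCompl N₁ N₂ → N₁ = ⊥ ∨ N₂ = ⊥

/-- the type of a local ring: length of Hom(k, R) -/
noncomputable def typeLen (R : Type) [CommRing R] [IsLocalRing R] : WithBot ℕ∞ :=
  mlength R ((R ⧸ IsLocalRing.maximalIdeal R) →ₗ[R] R)

/-!
Splitting off free summands of `M`, we may assume that no functional on `M` is surjective; since `M`
is reflexive and `𝔪³ = 0`, this forces `𝔪² M = 0`. As `R` is not self-injective, `r ≠ 1`, hence the
residue field is not reflexive and cannot be a direct summand of a reflexive module. Therefore every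
reflexive module `M` killed by `𝔪²` has `soc M = 𝔪 M`, and, writing `β` for the minimal number of
generators and `*` for the dual, `length M = β(M) + r β(M*)`.

Vanishing of `Ext¹` keeps a minimal cover `0 → A → F → M → 0` exact under dualizing. Comparing the
lengths of the socles of `A` and `F` gives `soc F = 𝔪 A ⊆ 𝔪² F`, so `soc R = 𝔪²` has length `r`.
Let `e` be the length of `𝔪 / 𝔪²`. Counting lengths in the sequence and in its dual gives
`β(A) = β(M*)` because `r ≠ 1`, and then `e β(M) = (r + 1) β(M*)`. Exchanging `M` and `M*` gives
`e² = (r + 1)²`.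
-/

section Ext

open Opposite

universe u v w

theorem subsingleton_ext_succ_iff {R : Type u} [Ring R] {C : Type v} [Category.{w} C] [Abelian C]
    [Linear R C] [EnoughProjectives C] {X : C} (P : ProjectiveResolution X) (Y : C) (n : ℕ) :
    Subsingleton (((Ext R C (n + 1)).obj (op X)).obj Y) ↔
      ∀ g : P.complex.X (n + 1) ⟶ Y, P.complex.d (n + 2) (n + 1) ≫ g = 0 →
        ∃ f : P.complex.X n ⟶ Y, P.complex.d (n + 1) n ≫ f = g := by
  have isZero_ext_iff :
      Limits.IsZero (((Ext R C (n + 1)).obj (op X)).obj Y) ↔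
        Limits.IsZero ((P.complex.linearYonedaObj R Y).homology (n + 1)) :=
    ⟨fun h ↦ h.of_iso (P.isoExt (n + 1) Y).symm, fun h ↦ h.of_iso (P.isoExt (n + 1) Y)⟩
  rw [← ModuleCat.isZero_iff_subsingleton, isZero_ext_iff,
    ← HomologicalComplex.exactAt_iff_isZero_homology,
    HomologicalComplex.exactAt_iff' _ n (n + 1) (n + 2) (by simp) (by simp),
    ShortComplex.moduleCat_exact_iff]
  rfl

/-- `ExtVanishes R M N n` means `Extⁿ(M, N) = 0`. -/
abbrev ExtVanishes (R : Type u) [CommRing R] (M N : Type u) [AddCommGroup M] [Module R M]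
    [AddCommGroup N] [Module R N] (n : ℕ) : Prop :=
  Subsingleton (((Ext R (ModuleCat.{u} R) n).obj (op (.of R M))).obj (.of R N))

variable {R M N K F G : Type u} [CommRing R] [AddCommGroup M] [Module R M]
  [AddCommGroup N] [Module R N] [AddCommGroup K] [Module R K]
  [AddCommGroup F] [Module R F] [AddCommGroup G] [Module R G]

theorem extVanishes_succ_of_injective [Module.Injective R N] (n : ℕ) :
    ExtVanishes R M N (n + 1) := by
  have : Injective (ModuleCat.of R N) := Module.injective_object_of_injective_module R N
  let P := projectiveResolution (ModuleCat.of R M)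
  exact (subsingleton_ext_succ_iff P _ n).2 fun g hg ↦
    ⟨(P.exact_succ n).descToInjective g hg, (P.exact_succ n).comp_descToInjective g hg⟩

theorem ExtVanishes.of_retract {n : ℕ} (h : ExtVanishes R M N n) (s : K →ₗ[R] M) (t : M →ₗ[R] K)
    (hts : t ∘ₗ s = LinearMap.id) : ExtVanishes R K N n := by
  let retract : Retract (ModuleCat.of R K) (ModuleCat.of R M) :=
    ⟨ModuleCat.ofHom s, ModuleCat.ofHom t, by rw [← ModuleCat.ofHom_comp, hts, ModuleCat.ofHom_id]⟩
  let extRetract := retract.op.map ((Ext R (ModuleCat.{u} R) n).flip.obj (.of R N))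
  have hleft : Function.LeftInverse extRetract.r.hom extRetract.i.hom := fun x ↦
    LinearMap.congr_fun (congrArg ModuleCat.Hom.hom extRetract.retract) x
  exact @Function.Injective.subsingleton _ _ _ hleft.injective h

/-- Schanuel-type comparison: the extension problem along `ker p` is transported to `ker q` through
lifts `F → G → F` of the identity of `M`. -/
theorem exists_extend_ker_of_projective [Module.Projective R F] [Module.Projective R G]
    {p : F →ₗ[R] M} {q : G →ₗ[R] M} (hp : Function.Surjective p) (hq : Function.Surjective q)
    (hext : ∀ φ : LinearMap.ker q →ₗ[R] N, ∃ ψ : G →ₗ[R] N, ψ ∘ₗ (LinearMap.ker q).subtype = φ)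
    (φ : LinearMap.ker p →ₗ[R] N) : ∃ ψ : F →ₗ[R] N, ψ ∘ₗ (LinearMap.ker p).subtype = φ := by
  obtain ⟨β, hβ⟩ := Module.projective_lifting_property q p hq
  obtain ⟨α, hα⟩ := Module.projective_lifting_property p q hp
  replace hβ (x : F) : q (β x) = p x := LinearMap.congr_fun hβ x
  replace hα (x : G) : p (α x) = q x := LinearMap.congr_fun hα x
  let α' : LinearMap.ker q →ₗ[R] LinearMap.ker p :=
    (α ∘ₗ (LinearMap.ker q).subtype).codRestrict _ fun x ↦ by simp [hα]
  let δ : F →ₗ[R] LinearMap.ker p := (α ∘ₗ β - LinearMap.id).codRestrict _ fun x ↦ by simp [hα, hβ]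
  obtain ⟨ψ, hψ⟩ := hext (φ ∘ₗ α')
  refine ⟨ψ ∘ₗ β - φ ∘ₗ δ, LinearMap.ext fun x ↦ ?_⟩
  have hβx : β x ∈ LinearMap.ker q := by simp [hβ]
  have hα'β : α' ⟨β x, hβx⟩ = δ x + x :=
    Subtype.ext (show α (β x) = (α (β x) - x) + x by rw [sub_add_cancel])
  have hψβ : ψ (β x) = φ (δ x + x) := hα'β ▸ LinearMap.congr_fun hψ ⟨β x, hβx⟩
  simp [hψβ]

theorem ExtVanishes.exists_extend_ker (h : ExtVanishes R M N 1) [Module.Projective R F]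
    {p : F →ₗ[R] M} (hp : Function.Surjective p) (φ : LinearMap.ker p →ₗ[R] N) :
    ∃ ψ : F →ₗ[R] N, ψ ∘ₗ (LinearMap.ker p).subtype = φ := by
  let P := projectiveResolution (ModuleCat.of R M)
  have : Module.Projective R (P.complex.X 0) := (IsProjective.iff_projective _).2 (P.projective 0)
  let q : P.complex.X 0 →ₗ[R] M := (P.π.f 0).hom
  have hq : Function.Surjective q :=
    (ModuleCat.epi_iff_surjective _).1 (inferInstance : Epi (P.π.f 0))
  have hker : LinearMap.range (P.complex.d 1 0).hom = LinearMap.ker q :=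
    P.exact₀.moduleCat_range_eq_ker
  refine exists_extend_ker_of_projective hp hq (fun φ ↦ ?_) φ
  let d : P.complex.X 1 →ₗ[R] LinearMap.ker q :=
    (P.complex.d 1 0).hom.codRestrict _ fun x ↦ hker ▸ LinearMap.mem_range_self _ x
  have hd : d ∘ₗ (P.complex.d 2 1).hom = 0 := by
    ext x
    exact LinearMap.congr_fun (congrArg ModuleCat.Hom.hom (P.complex.d_comp_d 2 1 0)) x
  obtain ⟨ψ, hψ⟩ := (subsingleton_ext_succ_iff P _ 0).1 h (ModuleCat.ofHom (φ ∘ₗ d)) (by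
    ext x
    simpa using congrArg φ (LinearMap.congr_fun hd x))
  refine ⟨ψ.hom, LinearMap.ext fun ⟨x, hx⟩ ↦ ?_⟩
  obtain ⟨y, rfl⟩ := hker ▸ hx
  exact LinearMap.congr_fun (congrArg ModuleCat.Hom.hom hψ) y

theorem isGorensteinLocalRing_of_injective (R : Type) [CommRing R] [IsNoetherianRing R]
    [IsLocalRing R] [Module.Injective R R] : IsGorensteinLocalRing R := by
  refine ⟨inferInstance, inferInstance, 0, fun N i hi ↦ ?_⟩
  obtain ⟨n, rfl⟩ := Nat.exists_eq_add_one.2 hi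
  exact extVanishes_succ_of_injective n

end Ext

section Length

open IsLocalRing
open Module (length IsTorsionBySet)

theorem mem_smul_top_iff_forall_dual {R M : Type*} [CommRing R] [AddCommGroup M] [Module R M]
    [Module.Projective R M] {I : Ideal R} {x : M} :
    x ∈ I • (⊤ : Submodule R M) ↔ ∀ f : Module.Dual R M, f x ∈ I := by
  refine ⟨fun hx f ↦ ?_, fun hx ↦ ?_⟩
  · have hfx : f x ∈ (I • (⊤ : Submodule R M)).map f := Submodule.mem_map_of_mem hx
    rw [Submodule.map_smul''] at hfx
    exact Ideal.mul_le_left hfx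
  · obtain ⟨s, hs⟩ := Module.projective_def'.1 ‹Module.Projective R M›
    rw [← LinearMap.id_apply (R := R) x, ← hs, LinearMap.comp_apply,
      Finsupp.linearCombination_apply]
    exact Submodule.sum_mem _ fun m _ ↦
      Submodule.smul_mem_smul (hx (Finsupp.lapply m ∘ₗ s)) Submodule.mem_top

variable {R M N : Type*} [CommRing R] [AddCommGroup M] [Module R M] [AddCommGroup N] [Module R N]

theorem length_eq_add_quotient (K : Submodule R M) :
    length R M = length R K + length R (M ⧸ K) :=
  Module.length_eq_add_of_exact K.subtype K.mkQ K.subtype_injective K.mkQ_surjective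
    (LinearMap.exact_subtype_mkQ K)

theorem eq_of_le_of_length_le [IsArtinian R M] [IsNoetherian R M] {K L : Submodule R M}
    (hKL : K ≤ L) (hlen : length R L ≤ length R K) : K = L := by
  rw [Module.length_submodule, Module.length_submodule] at hlen
  exact hKL.eq_of_not_lt fun hlt ↦ (Submodule.height_strictMono hlt).not_ge hlen

theorem length_quotient_sup_eq_iff {K L : Submodule R M} (hK : IsFiniteLength R (M ⧸ K)) :
    length R (M ⧸ K ⊔ L) = length R (M ⧸ K) ↔ L ≤ K := by
  obtain ⟨_, _⟩ := isFiniteLength_iff_isNoetherian_isArtinian.1 hK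
  refine ⟨fun h ↦ ?_, fun h ↦ by rw [sup_eq_left.2 h]⟩
  rw [← (Submodule.quotientQuotientEquivQuotientSup K L).length_eq] at h
  have hmap : L.map K.mkQ = ⊥ := by
    by_contra hne
    exact ((L.map K.mkQ).length_quotient_lt hne).ne h
  rw [← K.ker_mkQ, LinearMap.le_ker_iff_map, hmap]

theorem length_linearMap_eq_add (K : Submodule R M) :
    length R (M →ₗ[R] N) = length R ((M ⧸ K) →ₗ[R] N) +
      length R (LinearMap.range (LinearMap.lcomp R N K.subtype)) := by
  refine Module.length_eq_add_of_exact (LinearMap.lcomp R N K.mkQ)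
    (LinearMap.lcomp R N K.subtype).rangeRestrict
    (LinearMap.lcomp_injective_of_surjective _ K.mkQ_surjective)
    (LinearMap.surjective_rangeRestrict _) fun φ ↦ ?_
  rw [← LinearMap.exact_lcomp_of_exact_of_surjective N (LinearMap.exact_subtype_mkQ K)
    K.mkQ_surjective φ, ← ZeroMemClass.coe_eq_zero]
  rfl

theorem range_lcomp_mkQ_smul_top (I : Ideal R) :
    LinearMap.range (LinearMap.lcomp R N (I • (⊤ : Submodule R M)).mkQ) =
      Submodule.torsionBySet R (M →ₗ[R] N) I := by
  ext φ
  rw [Submodule.mem_torsionBySet_iff]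
  constructor
  · rintro ⟨ψ, rfl⟩ a
    ext x
    change (a : R) • ψ (Submodule.mkQ _ x) = 0
    rw [← map_smul, Module.isTorsionBySet_quotient_ideal_smul M I, map_zero]
  · intro hφ
    have hle : I • (⊤ : Submodule R M) ≤ LinearMap.ker φ := Submodule.smul_le.2 fun a ha x _ ↦ by
      simpa using LinearMap.congr_fun (hφ ⟨a, ha⟩) x
    exact ⟨Submodule.liftQ _ φ hle, Submodule.liftQ_mkQ _ _ hle⟩

variable [IsLocalRing R]

instance isSimpleModule_quotient_maximalIdeal : IsSimpleModule R (R ⧸ maximalIdeal R) :=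
  isSimpleModule_iff_isCoatom.2 (Ideal.isMaximal_def.1 (maximalIdeal.isMaximal R))

theorem isTorsionBySet_maximalIdeal_of_isSimpleModule [IsSimpleModule R M] :
    IsTorsionBySet R M (maximalIdeal R) := by
  have hann := IsSimpleModule.annihilator_isMaximal (R := R) (M := M)
  exact eq_maximalIdeal hann ▸ Module.isTorsionBySet_annihilator R M

theorem exists_linearEquiv_pi_residue [Module.Finite R M]
    (hM : IsTorsionBySet R M (maximalIdeal R)) :
    ∃ n : ℕ, Nonempty (M ≃ₗ[R] (Fin n → R ⧸ maximalIdeal R)) := by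
  let : Field (R ⧸ maximalIdeal R) := Ideal.Quotient.field _
  let := hM.module
  have := hM.isScalarTower (S := R)
  have : Module.Finite (R ⧸ maximalIdeal R) M := Module.Finite.of_restrictScalars_finite R _ _
  exact ⟨_, ⟨(Module.finBasis (R ⧸ maximalIdeal R) M).equivFun.restrictScalars R⟩⟩

theorem length_linearMap_of_isTorsionBySet [Module.Finite R M]
    (hM : IsTorsionBySet R M (maximalIdeal R)) :
    length R (M →ₗ[R] N) = length R M * length R ((R ⧸ maximalIdeal R) →ₗ[R] N) := by
  obtain ⟨n, ⟨e⟩⟩ := exists_linearEquiv_pi_residue hM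
  calc length R (M →ₗ[R] N)
      = length R (Fin n → ((R ⧸ maximalIdeal R) →ₗ[R] N)) :=
        (e.congrLeft N R ≪≫ₗ (LinearMap.lsum R (fun _ ↦ R ⧸ maximalIdeal R) R).symm).length_eq
    _ = length R M * length R ((R ⧸ maximalIdeal R) →ₗ[R] N) := by
        rw [e.length_eq, Module.length_pi, Module.length_pi,
          Module.length_eq_one R (R ⧸ maximalIdeal R), mul_one]

theorem length_linearMap_le (hM : IsFiniteLength R M) :
    length R (M →ₗ[R] N) ≤ length R M * length R ((R ⧸ maximalIdeal R) →ₗ[R] N) := by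
  induction hM with
  | of_subsingleton => simp
  | @of_simple_quotient M _ _ K _ hK ih =>
    have := (isFiniteLength_iff_isNoetherian_isArtinian.1 (IsFiniteLength.of_simple_quotient hK)).1
    have hquot : length R ((M ⧸ K) →ₗ[R] N) =
        length R (M ⧸ K) * length R ((R ⧸ maximalIdeal R) →ₗ[R] N) :=
      length_linearMap_of_isTorsionBySet isTorsionBySet_maximalIdeal_of_isSimpleModule
    have hrange : length R (LinearMap.range (LinearMap.lcomp R N K.subtype)) ≤
        length R (K →ₗ[R] N) :=
      Module.length_le_of_injective _ (Submodule.subtype_injective _)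
    calc length R (M →ₗ[R] N)
        = length R ((M ⧸ K) →ₗ[R] N) +
            length R (LinearMap.range (LinearMap.lcomp R N K.subtype)) := length_linearMap_eq_add K
      _ ≤ length R (M ⧸ K) * length R ((R ⧸ maximalIdeal R) →ₗ[R] N) +
            length R K * length R ((R ⧸ maximalIdeal R) →ₗ[R] N) :=
          add_le_add hquot.le (hrange.trans ih)
      _ = length R M * length R ((R ⧸ maximalIdeal R) →ₗ[R] N) := by
          rw [length_eq_add_quotient K, add_comm, add_mul]

end Length

section Invariants

open IsLocalRing
open Module (length Dual IsReflexive IsTorsionBySet finrank)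

/-- The minimal number of generators of a module; for a finitely generated module over a local
ring, the zeroth Betti number. -/
noncomputable def numGens (R M : Type*) [CommRing R] [AddCommGroup M] [Module R M] : ℕ :=
  (⊤ : Submodule R M).spanFinrank

/-- The socle of a module over a local ring: the elements killed by the maximal ideal. -/
abbrev socle (R M : Type*) [CommRing R] [IsLocalRing R] [AddCommGroup M] [Module R M] :
    Submodule R M :=
  Submodule.torsionBySet R M (maximalIdeal R)

/-- The type of a local ring of depth zero, as the length of `Hom(k, R)`. -/
noncomputable def ringType (R : Type*) [CommRing R] [IsLocalRing R] : ℕ∞ :=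
  length R ((R ⧸ maximalIdeal R) →ₗ[R] R)

variable {R M N : Type*} [CommRing R] [AddCommGroup M] [Module R M] [AddCommGroup N] [Module R N]

theorem isTorsionBySet_linearMap {s : Set R} (hM : IsTorsionBySet R M s) :
    IsTorsionBySet R (M →ₗ[R] N) s := fun φ a ↦ by
  ext x
  rw [LinearMap.smul_apply, ← map_smul, hM, map_zero, LinearMap.zero_apply]

theorem numGens_congr (e : M ≃ₗ[R] N) : numGens R M = numGens R N := by
  rw [numGens, numGens, ← Submodule.spanFinrank_map_eq_of_injective e.toLinearMap e.injective,
    Submodule.map_top, LinearEquiv.range]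

theorem numGens_pos [Module.Finite R M] [Nontrivial M] : 0 < numGens R M :=
  Nat.pos_of_ne_zero fun h ↦
    top_ne_bot ((Submodule.spanFinrank_eq_zero_iff_eq_bot Module.Finite.fg_top).1 h)

theorem numGens_dual_of_free [Module.Free R M] [Module.Finite R M] :
    numGens R (Dual R M) = numGens R M :=
  (numGens_congr (Module.Free.chooseBasis R M).toDualEquiv).symm

variable [IsLocalRing R]

theorem length_of_free_eq_numGens_mul [Module.Free R M] [Module.Finite R M] :
    length R M = numGens R M * length R R := by
  rw [Module.length_of_free_of_finite, Module.finrank_eq_spanFinrank_of_free, numGens]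

theorem length_quotient_maximalIdeal_smul_top [Module.Finite R M] :
    length R (M ⧸ maximalIdeal R • (⊤ : Submodule R M)) = numGens R M := by
  let : Field (R ⧸ maximalIdeal R) := Ideal.Quotient.field _
  have hfinrank := spanFinrank_eq_finrank_quotient (⊤ : Submodule R M) Module.Finite.fg_top
  let e := Submodule.Quotient.equiv _ (maximalIdeal R • (⊤ : Submodule R M))
    (Submodule.topEquiv (R := R) (M := M)) (by rw [Submodule.map_smul'', Submodule.map_top,
      LinearEquiv.range])
  rw [numGens, hfinrank, ← e.length_eq, ← Module.length_eq_finrank (R ⧸ maximalIdeal R)]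
  exact Module.length_eq_of_surjective (S := R) (R := R ⧸ maximalIdeal R)
    (Ideal.Quotient.mk_surjective (I := maximalIdeal R))

theorem numGens_eq_iff_ker_le [Module.Finite R M] {p : M →ₗ[R] N} (hp : Function.Surjective p) :
    numGens R N = numGens R M ↔ LinearMap.ker p ≤ maximalIdeal R • ⊤ := by
  have : Module.Finite R N := .of_surjective p hp
  let 𝔪N := maximalIdeal R • (⊤ : Submodule R N)
  have hker : LinearMap.ker (𝔪N.mkQ ∘ₗ p) = maximalIdeal R • ⊤ ⊔ LinearMap.ker p := by
    rw [LinearMap.ker_comp, Submodule.ker_mkQ, ← Submodule.comap_map_eq, Submodule.map_smul'',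
      Submodule.map_top, LinearMap.range_eq_top.2 hp]
  have hlen : length R (M ⧸ (maximalIdeal R • ⊤ ⊔ LinearMap.ker p)) = numGens R N := by
    rw [← length_quotient_maximalIdeal_smul_top, ← hker]
    exact (LinearMap.quotKerEquivOfSurjective (𝔪N.mkQ ∘ₗ p) (𝔪N.mkQ_surjective.comp hp)).length_eq
  rw [← Nat.cast_inj (R := ℕ∞), ← hlen, ← length_quotient_maximalIdeal_smul_top]
  refine length_quotient_sup_eq_iff (Module.length_ne_top_iff.1 ?_)
  rw [length_quotient_maximalIdeal_smul_top]
  exact ENat.natCast_ne_top _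

theorem exists_minimal_cover [Module.Finite R M] :
    ∃ p : (Fin (numGens R M) → R) →ₗ[R] M,
      Function.Surjective p ∧ LinearMap.ker p ≤ maximalIdeal R • ⊤ := by
  obtain ⟨s, hcard, hspan⟩ :=
    (Module.Finite.fg_top (R := R) (M := M)).exists_span_finset_card_eq_spanFinrank
  let p := Fintype.linearCombination R fun j ↦ ((s.equivFinOfCardEq hcard).symm j : M)
  have hp : Function.Surjective p := by
    rw [← LinearMap.range_eq_top, Fintype.range_linearCombination]
    convert hspan
    exact ((s.equivFinOfCardEq hcard).symm.surjective.range_comp Subtype.val).trans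
      Subtype.range_coe
  refine ⟨p, hp, (numGens_eq_iff_ker_le hp).1 ?_⟩
  rw [numGens.eq_def R (Fin _ → R), ← Module.finrank_eq_spanFinrank_of_free, Module.finrank_fin_fun]
  rfl

theorem mem_socle {x : M} : x ∈ socle R M ↔ ∀ a ∈ maximalIdeal R, a • x = 0 := by
  simp [socle]

theorem map_socle_le (f : M →ₗ[R] N) : (socle R M).map f ≤ socle R N := by
  rintro _ ⟨x, hx, rfl⟩
  exact mem_socle.2 fun a ha ↦ by rw [← map_smul, mem_socle.1 hx a ha, map_zero]

theorem length_socle_le_of_injective {f : M →ₗ[R] N} (hf : Function.Injective f) :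
    length R (socle R M) ≤ length R (socle R N) := by
  rw [(Submodule.equivMapOfInjective f hf _).length_eq]
  exact Module.length_le_of_injective _ (Submodule.inclusion_injective (map_socle_le f))

theorem length_socle_congr (e : M ≃ₗ[R] N) : length R (socle R M) = length R (socle R N) :=
  (length_socle_le_of_injective e.injective).antisymm
    (length_socle_le_of_injective e.symm.injective)

theorem length_socle_linearMap [Module.Finite R M] :
    length R (socle R (M →ₗ[R] N)) =
      numGens R M * length R ((R ⧸ maximalIdeal R) →ₗ[R] N) := by
  rw [socle, ← range_lcomp_mkQ_smul_top, ← length_quotient_maximalIdeal_smul_top,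
    ← length_linearMap_of_isTorsionBySet (Module.isTorsionBySet_quotient_ideal_smul M _)]
  exact (LinearEquiv.ofInjective _
    (LinearMap.lcomp_injective_of_surjective _ (Submodule.mkQ_surjective _))).length_eq.symm

theorem length_socle_of_isReflexive [IsNoetherianRing R] [Module.Finite R M] [IsReflexive R M] :
    length R (socle R M) = numGens R (Dual R M) * ringType R := by
  rw [length_socle_congr (Module.evalEquiv R M)]
  exact length_socle_linearMap

theorem ringType_eq_one_of_isReflexive_residue [IsNoetherianRing R]
    [IsReflexive R (R ⧸ maximalIdeal R)] : ringType R = 1 := by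
  have hk : IsTorsionBySet R (R ⧸ maximalIdeal R) (maximalIdeal R) :=
    isTorsionBySet_maximalIdeal_of_isSimpleModule
  refine eq_one_of_mul_left (a := ringType R) ?_
  calc ringType R * ringType R
      = length R (Dual R (Dual R (R ⧸ maximalIdeal R))) :=
        (length_linearMap_of_isTorsionBySet (isTorsionBySet_linearMap hk)).symm
    _ = length R (R ⧸ maximalIdeal R) := (Module.evalEquiv R _).length_eq.symm
    _ = 1 := Module.length_eq_one R _

theorem length_dual_le [IsArtinianRing R] [Module.Finite R M] :
    length R (Dual R M) ≤ length R M * ringType R :=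
  length_linearMap_le (Module.length_ne_top_iff.1 Module.length_ne_top)

theorem injective_of_ringType_eq_one [IsArtinianRing R] (hR : ringType R = 1) :
    Module.Injective R R := by
  refine Module.Baer.injective (Module.Baer.iff_surjective.2 fun I ↦ ?_)
  let restrict := LinearMap.lcomp R R I.subtype
  have hI : length R (I →ₗ[R] R) ≤ length R I := by
    simpa [hR] using length_dual_le (R := R) (M := I)
  have hquot : length R ((R ⧸ I) →ₗ[R] R) ≤ length R (R ⧸ I) := by
    simpa [hR] using length_dual_le (R := R) (M := R ⧸ I)
  have hrange : length R I ≤ length R (LinearMap.range restrict) := by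
    refine (ENat.add_le_add_iff_right (Module.length_ne_top (R := R) (M := R ⧸ I))).1 ?_
    calc length R I + length R (R ⧸ I)
        = length R (R →ₗ[R] R) := by
          rw [← length_eq_add_quotient, (LinearMap.ringLmapEquivSelf R R R).length_eq]
      _ = length R ((R ⧸ I) →ₗ[R] R) + length R (LinearMap.range restrict) :=
          length_linearMap_eq_add I
      _ ≤ length R (LinearMap.range restrict) + length R (R ⧸ I) := by
          rw [add_comm]
          gcongr
  refine LinearMap.range_eq_top.1 (eq_of_le_of_length_le le_top ?_)
  rw [Module.length_top]
  exact hI.trans hrange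

theorem exists_residue_retract [Module.Finite R M] {x : M} (hx : x ∈ socle R M)
    (hx' : x ∉ maximalIdeal R • (⊤ : Submodule R M)) :
    ∃ (i : (R ⧸ maximalIdeal R) →ₗ[R] M) (π : M →ₗ[R] R ⧸ maximalIdeal R),
      π ∘ₗ i = LinearMap.id := by
  let 𝔪M := maximalIdeal R • (⊤ : Submodule R M)
  obtain ⟨n, ⟨e⟩⟩ := exists_linearEquiv_pi_residue
    (Module.isTorsionBySet_quotient_ideal_smul M (maximalIdeal R))
  obtain ⟨j, hj⟩ : ∃ j, e (𝔪M.mkQ x) j ≠ 0 := by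
    refine Function.ne_iff.1 (e.map_ne_zero_iff.2 fun h ↦ hx' ?_)
    rwa [Submodule.mkQ_apply, Submodule.Quotient.mk_eq_zero] at h
  let π : M →ₗ[R] R ⧸ maximalIdeal R := LinearMap.proj j ∘ₗ e.toLinearMap ∘ₗ 𝔪M.mkQ
  let i : (R ⧸ maximalIdeal R) →ₗ[R] M :=
    Submodule.liftQ _ (LinearMap.toSpanSingleton R M x) (mem_socle.1 hx)
  have hi : i (Submodule.Quotient.mk 1) = x := one_smul R x
  have hbij : Function.Bijective (π ∘ₗ i) := LinearMap.bijective_of_ne_zero fun h ↦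
    hj (show π x = 0 by rw [← hi]; exact LinearMap.congr_fun h _)
  let u := LinearEquiv.ofBijective _ hbij
  exact ⟨i, u.symm.toLinearMap ∘ₗ π, LinearMap.ext fun y ↦ u.symm_apply_apply y⟩

theorem socle_eq_smul_top [IsNoetherianRing R] [Module.Finite R M] [IsReflexive R M]
    (hR : ringType R ≠ 1) (hM : IsTorsionBySet R M ↑(maximalIdeal R ^ 2)) :
    socle R M = maximalIdeal R • ⊤ := by
  refine le_antisymm (fun x hx ↦ ?_) (Submodule.smul_le.2 fun b hb y _ ↦ ?_)
  · by_contra hx'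
    obtain ⟨i, π, hπi⟩ := exists_residue_retract hx hx'
    have : IsReflexive R (R ⧸ maximalIdeal R) := .of_split i π hπi
    exact hR ringType_eq_one_of_isReflexive_residue
  · refine mem_socle.2 fun a ha ↦ ?_
    rw [smul_smul]
    exact hM (a := ⟨a * b, pow_two (maximalIdeal R) ▸ Ideal.mul_mem_mul ha hb⟩)

theorem length_eq_numGens_add [IsNoetherianRing R] [Module.Finite R M] [IsReflexive R M]
    (hR : ringType R ≠ 1) (hM : IsTorsionBySet R M ↑(maximalIdeal R ^ 2)) :
    length R M = numGens R M + numGens R (Dual R M) * ringType R := by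
  rw [length_eq_add_quotient (maximalIdeal R • (⊤ : Submodule R M)),
    length_quotient_maximalIdeal_smul_top, ← socle_eq_smul_top hR hM,
    length_socle_of_isReflexive, add_comm]

end Invariants

section LocalRing

open IsLocalRing
open Module (length Dual IsReflexive IsTorsionBySet)

variable {R M : Type*} [CommRing R] [AddCommGroup M] [Module R M]

theorem isTorsionBySet_of_le_smul_top {K : Submodule R M} {I : Ideal R} {n : ℕ}
    (hI : I ^ (n + 1) = ⊥) (hK : K ≤ I • ⊤) : IsTorsionBySet R K ↑(I ^ n) := fun x a ↦ by
  have hax : (a : R) • (x : M) ∈ I ^ n • I • (⊤ : Submodule R M) :=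
    Submodule.smul_mem_smul a.2 (hK x.2)
  rw [← Submodule.mul_smul, ← pow_succ, hI, Submodule.bot_smul, Submodule.mem_bot] at hax
  exact Subtype.ext hax

theorem isTorsionBySet_of_forall_dual_mem [IsReflexive R M] {I : Ideal R} {n : ℕ}
    (hI : I ^ (n + 1) = ⊥) (hM : ∀ (f : Dual R M) (x : M), f x ∈ I) :
    IsTorsionBySet R M ↑(I ^ n) := fun x a ↦ by
  refine (Module.bijective_dual_eval R M).1 (LinearMap.ext fun f ↦ ?_)
  have hafx : (a : R) * f x ∈ I ^ (n + 1) := pow_succ I n ▸ Ideal.mul_mem_mul a.2 (hM f x)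
  simpa [hI] using hafx

variable [IsLocalRing R]

theorem length_socle_self : length R (socle R R) = ringType R := by
  rw [← length_socle_congr (LinearMap.ringLmapEquivSelf R R R), length_socle_linearMap, numGens,
    ← Module.finrank_eq_spanFinrank_of_free, Module.finrank_self, Nat.cast_one, one_mul, ringType]

theorem maximalIdeal_pow_le_socle {n : ℕ} (h : maximalIdeal R ^ (n + 1) = ⊥) :
    maximalIdeal R ^ n ≤ socle R R := fun x hx ↦ mem_socle.2 fun a ha ↦ by
  rw [← Ideal.mem_bot, ← h, pow_succ']
  exact Ideal.mul_mem_mul ha hx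

theorem socle_self_le_of_socle_le_smul_top [Module.Free R M] [Nontrivial M] {I : Ideal R}
    (h : socle R M ≤ I • ⊤) : socle R R ≤ I := by
  let b := Module.Free.chooseBasis R M
  obtain ⟨j⟩ := b.index_nonempty
  intro x hx
  have hxb : x • b j ∈ I • (⊤ : Submodule R M) :=
    h (map_socle_le (LinearMap.toSpanSingleton R M (b j)) ⟨x, hx, rfl⟩)
  simpa using mem_smul_top_iff_forall_dual.1 hxb (b.coord j)

variable (R) in
theorem length_self_eq_add_cotangent_add_sq :
    length R R = 1 + length R (maximalIdeal R ⧸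
      Submodule.comap (maximalIdeal R).subtype (maximalIdeal R ^ 2)) +
      length R ↥(maximalIdeal R ^ 2) := by
  let sq := Submodule.comap (maximalIdeal R).subtype (maximalIdeal R ^ 2)
  have hsq : length R sq = length R ↥(maximalIdeal R ^ 2) :=
    (Submodule.comapSubtypeEquivOfLe (Ideal.pow_le_self two_ne_zero)).length_eq
  rw [length_eq_add_quotient (maximalIdeal R), length_eq_add_quotient sq, hsq,
    Module.length_eq_one R (R ⧸ maximalIdeal R)]
  ring

end LocalRing

section Syzygies

open IsLocalRing
open Module (length Dual IsReflexive IsTorsionBySet)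

theorem isReflexive_ker {R F B : Type*} [CommRing R] [AddCommGroup F] [Module R F]
    [AddCommGroup B] [Module R B] [IsReflexive R F] [IsReflexive R B] {p : F →ₗ[R] B}
    (hp : Function.Surjective (LinearMap.ker p).subtype.dualMap) :
    IsReflexive R (LinearMap.ker p) where
  bijective_dual_eval' := by
    let i := (LinearMap.ker p).subtype
    have heval (x : LinearMap.ker p) : Dual.eval R F x = i.dualMap.dualMap (Dual.eval R _ x) := rfl
    refine ⟨fun x y hxy ↦ Subtype.ext ((Module.bijective_dual_eval R F).1 ?_), fun ξ ↦ ?_⟩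
    · rw [heval, heval, hxy]
    · obtain ⟨y, hy⟩ := (Module.bijective_dual_eval R F).2 (i.dualMap.dualMap ξ)
      have hpi : i.dualMap ∘ₗ p.dualMap = 0 := by ext f x; simp [i]
      have hpy : p y = 0 := by
        refine (injective_iff_map_eq_zero _).1 (Module.bijective_dual_eval R B).1 _
          (LinearMap.ext fun f ↦ ?_)
        calc f (p y) = ξ ((i.dualMap ∘ₗ p.dualMap) f) := LinearMap.congr_fun hy (p.dualMap f)
          _ = 0 := by rw [hpi, LinearMap.zero_apply, map_zero]
      refine ⟨⟨y, hpy⟩, LinearMap.ext fun g ↦ ?_⟩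
      obtain ⟨f, rfl⟩ := hp g
      exact LinearMap.congr_fun hy f

variable {R A F B : Type*} [CommRing R] [IsLocalRing R] [AddCommGroup A] [Module R A]
  [AddCommGroup F] [Module R F] [AddCommGroup B] [Module R B]

theorem range_le_maximalIdeal_smul_top [Module.Projective R F] {J : Ideal R} (hJ : J ≠ ⊥)
    (hA : IsTorsionBySet R A J) (i : A →ₗ[R] F) :
    LinearMap.range i ≤ maximalIdeal R • ⊤ := by
  rintro _ ⟨x, rfl⟩
  refine mem_smul_top_iff_forall_dual.2 fun f ↦ ?_
  by_contra hunit
  rw [notMem_maximalIdeal] at hunit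
  refine hJ (eq_bot_iff.2 fun a ha ↦ hunit.mul_left_eq_zero.1 ?_)
  rw [← smul_eq_mul, ← map_smul, ← map_smul, hA (a := ⟨a, ha⟩), map_zero, map_zero]

/-- A short exact sequence `0 → A → F → B → 0` that stays exact under `Hom(-, R)` and whose ends are
reflexive and killed by `𝔪²`. For `F` free, `A` is a syzygy of `B`; the conditions are symmetric in
`A` and `B` so that the notion is stable under dualizing. -/
structure IsReflexiveSyzygy (i : A →ₗ[R] F) (p : F →ₗ[R] B) : Prop where
  injective : Function.Injective i
  surjective : Function.Surjective p
  exact : Function.Exact i p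
  surjective_dualMap : Function.Surjective i.dualMap
  isReflexive_left : IsReflexive R A
  isReflexive_right : IsReflexive R B
  isTorsionBySet_left : IsTorsionBySet R A ↑(maximalIdeal R ^ 2)
  isTorsionBySet_right : IsTorsionBySet R B ↑(maximalIdeal R ^ 2)

theorem isReflexiveSyzygy_ker (hm3 : maximalIdeal R ^ 3 = ⊥) [IsReflexive R F] [IsReflexive R B]
    (hB : IsTorsionBySet R B ↑(maximalIdeal R ^ 2)) {p : F →ₗ[R] B} (hp : Function.Surjective p)
    (hker : LinearMap.ker p ≤ maximalIdeal R • ⊤)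
    (hdual : Function.Surjective (LinearMap.ker p).subtype.dualMap) :
    IsReflexiveSyzygy (LinearMap.ker p).subtype p where
  injective := Subtype.val_injective
  surjective := hp
  exact := LinearMap.exact_subtype_ker_map p
  surjective_dualMap := hdual
  isReflexive_left := isReflexive_ker hdual
  isReflexive_right := inferInstance
  isTorsionBySet_left := isTorsionBySet_of_le_smul_top hm3 hker
  isTorsionBySet_right := hB

namespace IsReflexiveSyzygy

variable {i : A →ₗ[R] F} {p : F →ₗ[R] B}

theorem dual (h : IsReflexiveSyzygy i p) : IsReflexiveSyzygy p.dualMap i.dualMap where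
  injective := LinearMap.dualMap_injective_of_surjective h.surjective
  surjective := h.surjective_dualMap
  exact := LinearMap.exact_lcomp_of_exact_of_surjective R h.exact h.surjective
  surjective_dualMap ξ := by
    have := h.isReflexive_right
    obtain ⟨b, rfl⟩ := (Module.bijective_dual_eval R B).2 ξ
    obtain ⟨x, rfl⟩ := h.surjective b
    exact ⟨Dual.eval R F x, rfl⟩
  isReflexive_left := have := h.isReflexive_right; inferInstance
  isReflexive_right := have := h.isReflexive_left; inferInstance
  isTorsionBySet_left := isTorsionBySet_linearMap h.isTorsionBySet_right
  isTorsionBySet_right := isTorsionBySet_linearMap h.isTorsionBySet_left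

variable [Module.Free R F]

theorem range_le (h : IsReflexiveSyzygy i p) (hm2 : maximalIdeal R ^ 2 ≠ ⊥) :
    LinearMap.range i ≤ maximalIdeal R • ⊤ :=
  range_le_maximalIdeal_smul_top hm2 h.isTorsionBySet_left i

variable [Module.Finite R F]

theorem numGens_right (h : IsReflexiveSyzygy i p) (hm2 : maximalIdeal R ^ 2 ≠ ⊥) :
    numGens R B = numGens R F :=
  (numGens_eq_iff_ker_le h.surjective).2 (h.exact.linearMap_ker_eq.trans_le (h.range_le hm2))

theorem numGens_dual_left (h : IsReflexiveSyzygy i p) (hm2 : maximalIdeal R ^ 2 ≠ ⊥) :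
    numGens R (Dual R A) = numGens R F :=
  (h.dual.numGens_right hm2).trans numGens_dual_of_free

variable [IsArtinianRing R]

theorem map_socle_eq (h : IsReflexiveSyzygy i p) (hm2 : maximalIdeal R ^ 2 ≠ ⊥) :
    (socle R A).map i = socle R F := by
  have := h.isReflexive_left
  have : Module.Finite R A := .of_injective i h.injective
  refine eq_of_le_of_length_le (map_socle_le i) ?_
  rw [← (Submodule.equivMapOfInjective i h.injective _).length_eq, length_socle_of_isReflexive,
    length_socle_of_isReflexive, h.numGens_dual_left hm2, numGens_dual_of_free]

theorem socle_self_le [Nontrivial B] (h : IsReflexiveSyzygy i p) (hm2 : maximalIdeal R ^ 2 ≠ ⊥)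
    (hr : ringType R ≠ 1) : socle R R ≤ maximalIdeal R ^ 2 := by
  have := h.isReflexive_left
  have : Module.Finite R A := .of_injective i h.injective
  have : Nontrivial F := h.surjective.nontrivial
  refine socle_self_le_of_socle_le_smul_top (M := F) ?_
  calc socle R F = maximalIdeal R • LinearMap.range i := by
        rw [← h.map_socle_eq hm2, socle_eq_smul_top hr h.isTorsionBySet_left,
          Submodule.map_smul'', Submodule.map_top]
    _ ≤ maximalIdeal R • maximalIdeal R • ⊤ := Submodule.smul_mono le_rfl (h.range_le hm2)
    _ = maximalIdeal R ^ 2 • ⊤ := by rw [pow_two, Submodule.mul_smul]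

theorem numGens_mul_length_self (h : IsReflexiveSyzygy i p) (hm2 : maximalIdeal R ^ 2 ≠ ⊥)
    (hr : ringType R ≠ 1) :
    numGens R F * length R R = numGens R A + numGens R F * ringType R +
      (numGens R F + numGens R (Dual R B) * ringType R) := by
  have := h.isReflexive_left
  have := h.isReflexive_right
  have : Module.Finite R A := .of_injective i h.injective
  have : Module.Finite R B := .of_surjective p h.surjective
  rw [← length_of_free_eq_numGens_mul,
    Module.length_eq_add_of_exact i p h.injective h.surjective h.exact,
    length_eq_numGens_add hr h.isTorsionBySet_left, length_eq_numGens_add hr h.isTorsionBySet_right,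
    h.numGens_dual_left hm2, h.numGens_right hm2]

variable {e r : ℕ}

theorem mul_numGens_eq_add (h : IsReflexiveSyzygy i p) (hm2 : maximalIdeal R ^ 2 ≠ ⊥)
    (hr : ringType R = r) (hr1 : r ≠ 1) (hlen : length R R = 1 + e + r) :
    e * numGens R F = numGens R A + r * numGens R (Dual R B) := by
  have hcount := h.numGens_mul_length_self hm2 (by rw [hr]; exact_mod_cast hr1)
  rw [hlen, hr] at hcount
  norm_cast at hcount
  linarith

theorem succ_mul_numGens_dual (h : IsReflexiveSyzygy i p) (hm2 : maximalIdeal R ^ 2 ≠ ⊥)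
    (hr : ringType R = r) (hr1 : r ≠ 1) (hlen : length R R = 1 + e + r) :
    (r + 1) * numGens R (Dual R B) = e * numGens R B := by
  have := h.isReflexive_left
  have hcount : e * numGens R F = numGens R A + r * numGens R (Dual R B) :=
    h.mul_numGens_eq_add hm2 hr hr1 hlen
  have hcount_dual : e * numGens R F = numGens R (Dual R B) + r * numGens R A := by
    rw [← numGens_dual_of_free, h.dual.mul_numGens_eq_add hm2 hr hr1 hlen,
      ← numGens_congr (Module.evalEquiv R A)]
  have hleft : numGens R A = numGens R (Dual R B) := by
    have hprod : ((r : ℤ) - 1) * (numGens R A - numGens R (Dual R B)) = 0 := by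
      zify at hcount hcount_dual
      linarith
    rcases mul_eq_zero.1 hprod with h | h <;> omega
  rw [h.numGens_right hm2, hcount, hleft]
  ring

end IsReflexiveSyzygy

end Syzygies

section Reduction

open IsLocalRing
open Module (length Dual IsReflexive IsTorsionBySet)

universe u

/-- The degree-one part of G-dimension zero: `M` is finitely generated and reflexive, and the first
`Ext` groups of `M` and of its dual into the ring vanish. -/
structure IsWeaklyTotallyReflexive (R M : Type u) [CommRing R] [AddCommGroup M] [Module R M] :
    Prop where
  finite : Module.Finite R M
  isReflexive : IsReflexive R M
  extVanishes : ExtVanishes R M R 1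
  extVanishes_dual : ExtVanishes R (Dual R M) R 1

variable {R M K : Type u} [CommRing R] [AddCommGroup M] [Module R M] [AddCommGroup K] [Module R K]

namespace IsWeaklyTotallyReflexive

theorem dual [IsNoetherianRing R] (h : IsWeaklyTotallyReflexive R M) :
    IsWeaklyTotallyReflexive R (Dual R M) where
  finite := have := h.finite; inferInstance
  isReflexive := have := h.isReflexive; inferInstance
  extVanishes := h.extVanishes_dual
  extVanishes_dual :=
    have := h.isReflexive
    let e := Module.evalEquiv R M
    h.extVanishes.of_retract e.symm.toLinearMap e.toLinearMap (LinearMap.ext e.apply_symm_apply)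

theorem of_retract (h : IsWeaklyTotallyReflexive R M) (s : K →ₗ[R] M) (t : M →ₗ[R] K)
    (hts : t ∘ₗ s = LinearMap.id) : IsWeaklyTotallyReflexive R K where
  finite := have := h.finite; .of_surjective t (LinearMap.surjective_of_comp_eq_id _ _ hts)
  isReflexive := have := h.isReflexive; .of_split s t hts
  extVanishes := h.extVanishes.of_retract s t hts
  extVanishes_dual := h.extVanishes_dual.of_retract t.dualMap s.dualMap <| by
    rw [LinearMap.dualMap_comp_dualMap, hts, LinearMap.dualMap_id]

theorem of_equiv (h : IsWeaklyTotallyReflexive R M) (e : M ≃ₗ[R] K) :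
    IsWeaklyTotallyReflexive R K :=
  h.of_retract e.symm.toLinearMap e.toLinearMap (LinearMap.ext e.apply_symm_apply)

theorem exists_lt_of_surjective [Nontrivial R] {N : Submodule R M}
    (hN : IsWeaklyTotallyReflexive R N) (hfree : ¬ Module.Free R N) {f : Dual R N}
    (hf : Function.Surjective f) :
    ∃ K < N, IsWeaklyTotallyReflexive R K ∧ ¬ Module.Free R K := by
  have hsplit := (LinearMap.exact_subtype_ker_map f).split_tfae Subtype.val_injective hf
  have hsection : ∃ g : R →ₗ[R] N, f ∘ₗ g = LinearMap.id :=
    Module.projective_lifting_property f LinearMap.id hf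
  obtain ⟨t, ht⟩ := (hsplit.out 0 1).1 hsection
  obtain ⟨prodEquiv, -, -⟩ := (hsplit.out 0 2).1 hsection
  let e : LinearMap.ker f ≃ₗ[R] (LinearMap.ker f).map N.subtype := Submodule.equivSubtypeMap N _
  refine ⟨_, (Submodule.map_subtype_le N _).lt_of_ne fun h ↦ ?_, (hN.of_retract _ t ht).of_equiv e,
    fun hker ↦ hfree ?_⟩
  · have htop : LinearMap.ker f = ⊤ :=
      Submodule.map_injective_of_injective N.subtype_injective (h.trans N.map_subtype_top.symm)
    obtain ⟨x, hx⟩ := hf 1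
    rw [LinearMap.ker_eq_top.1 htop] at hx
    exact zero_ne_one hx
  · have : Module.Free R (LinearMap.ker f) := .of_equiv e.symm
    exact .of_equiv prodEquiv.symm

theorem exists_isTorsionBySet [IsArtinianRing R] [IsLocalRing R] {n : ℕ}
    (hm : maximalIdeal R ^ (n + 1) = ⊥) (hM : IsWeaklyTotallyReflexive R M)
    (hfree : ¬ Module.Free R M) :
    ∃ N : Submodule R M, IsWeaklyTotallyReflexive R N ∧ Nontrivial N ∧
      IsTorsionBySet R N ↑(maximalIdeal R ^ n) := by
  have := hM.finite
  let summands := {N : Submodule R M | IsWeaklyTotallyReflexive R N ∧ ¬ Module.Free R N}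
  have hne : summands.Nonempty :=
    ⟨⊤, hM.of_equiv Submodule.topEquiv.symm, fun h ↦ hfree (.of_equiv Submodule.topEquiv)⟩
  obtain ⟨N, ⟨hN, hNfree⟩, hmin⟩ := IsArtinian.set_has_minimal summands hne
  have := hN.isReflexive
  refine ⟨N, hN, ?_, isTorsionBySet_of_forall_dual_mem hm fun f x ↦ ?_⟩
  · by_contra htriv
    rw [not_nontrivial_iff_subsingleton] at htriv
    exact hNfree (.of_subsingleton R N)
  · by_contra hunit
    rw [notMem_maximalIdeal] at hunit
    have hf : Function.Surjective f := LinearMap.range_eq_top.1 <|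
      Ideal.eq_top_of_isUnit_mem _ (LinearMap.mem_range_self f x) hunit
    obtain ⟨K, hlt, hK⟩ := hN.exists_lt_of_surjective hNfree hf
    exact hmin K hK hlt

theorem exists_isReflexiveSyzygy [IsLocalRing R] (hm3 : maximalIdeal R ^ 3 = ⊥)
    (hM : IsWeaklyTotallyReflexive R M) (htors : IsTorsionBySet R M ↑(maximalIdeal R ^ 2)) :
    ∃ (n : ℕ) (p : (Fin n → R) →ₗ[R] M), IsReflexiveSyzygy (LinearMap.ker p).subtype p := by
  have := hM.finite
  have := hM.isReflexive
  obtain ⟨p, hp, hker⟩ := exists_minimal_cover (R := R) (M := M)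
  exact ⟨_, p, isReflexiveSyzygy_ker hm3 htors hp hker (hM.extVanishes.exists_extend_ker hp)⟩

end IsWeaklyTotallyReflexive

variable [IsArtinianRing R] [IsLocalRing R]

theorem length_sq_eq_and_length_cotangent_eq [Nontrivial M] (hM : IsWeaklyTotallyReflexive R M)
    (htors : IsTorsionBySet R M ↑(maximalIdeal R ^ 2)) (hm3 : maximalIdeal R ^ 3 = ⊥)
    (hm2 : maximalIdeal R ^ 2 ≠ ⊥) {r : ℕ} (hr : ringType R = r) (hr1 : r ≠ 1) :
    length R ↥(maximalIdeal R ^ 2) = r ∧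
      length R (maximalIdeal R ⧸
        Submodule.comap (maximalIdeal R).subtype (maximalIdeal R ^ 2)) = (r + 1 : ℕ) := by
  have := hM.finite
  have := hM.isReflexive
  obtain ⟨_, p, h⟩ := hM.exists_isReflexiveSyzygy hm3 htors
  obtain ⟨_, q, h'⟩ := hM.dual.exists_isReflexiveSyzygy hm3 (isTorsionBySet_linearMap htors)
  have hsocle : socle R R ≤ maximalIdeal R ^ 2 :=
    h.socle_self_le hm2 (by rw [hr]; exact_mod_cast hr1)
  have hsq : length R ↥(maximalIdeal R ^ 2) = r := by
    rw [← hr, ← length_socle_self, hsocle.antisymm (maximalIdeal_pow_le_socle hm3)]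
  refine ⟨hsq, ?_⟩
  obtain ⟨e, he⟩ := ENat.ne_top_iff_exists.1 (Module.length_ne_top (R := R) (M := maximalIdeal R ⧸
    Submodule.comap (maximalIdeal R).subtype (maximalIdeal R ^ 2)))
  have hlen : length R R = 1 + e + r := by
    rw [length_self_eq_add_cotangent_add_sq R, ← he, hsq]
  have hrel : (r + 1) * numGens R (Dual R M) = e * numGens R M :=
    h.succ_mul_numGens_dual hm2 hr hr1 hlen
  have hrel_dual : (r + 1) * numGens R M = e * numGens R (Dual R M) := by
    rw [← h'.succ_mul_numGens_dual hm2 hr hr1 hlen, ← numGens_congr (Module.evalEquiv R M)]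
  have hsquare : e ^ 2 * numGens R M = (r + 1) ^ 2 * numGens R M := by
    calc e ^ 2 * numGens R M = e * (e * numGens R M) := by ring
      _ = (r + 1) * (e * numGens R (Dual R M)) := by rw [← hrel]; ring
      _ = (r + 1) ^ 2 * numGens R M := by rw [← hrel_dual]; ring
  rw [← he, Nat.pow_left_injective two_ne_zero (Nat.eq_of_mul_eq_mul_right numGens_pos hsquare)]

end Reduction

open IsLocalRing in
theorem stmt_5_general.{u} {R M : Type u} [CommRing R] [IsNoetherianRing R] [IsLocalRing R]
    [AddCommGroup M] [Module R M] (hinj : ¬ Module.Injective R R)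
    (hm3 : maximalIdeal R ^ 3 = ⊥) (hm2 : maximalIdeal R ^ 2 ≠ ⊥)
    (hM : IsWeaklyTotallyReflexive R M) (hfree : ¬ Module.Free R M) :
    ∃ r : ℕ, ringType R = r ∧
      Module.length R (maximalIdeal R ⧸
        Submodule.comap (maximalIdeal R).subtype (maximalIdeal R ^ 2)) = (r + 1 : ℕ) ∧
      Module.length R ↥(maximalIdeal R ^ 2) = r := by
  have : IsArtinianRing R := isArtinianRing_iff_isNilpotent_maximalIdeal R |>.2 ⟨3, hm3⟩
  obtain ⟨r, hr⟩ := ENat.ne_top_iff_exists.1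
    (Module.length_ne_top (R := R) (M := (R ⧸ maximalIdeal R) →ₗ[R] R))
  have hr1 : r ≠ 1 := fun h ↦ hinj (injective_of_ringType_eq_one (by rw [ringType, ← hr, h]; rfl))
  obtain ⟨N, hN, _, htors⟩ := hM.exists_isTorsionBySet hm3 hfree
  obtain ⟨hsq, hcot⟩ := length_sq_eq_and_length_cotangent_eq hN htors hm3 hm2 hr.symm hr1
  exact ⟨r, hr.symm, hcot, hsq⟩

/-- dim_k m/m² = r + 1 and dim_k m² = r, where r is the type of R.
(Dimensions over the residue field are expressed as lengths over R.) -/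
theorem stmt_5 (R : Type) [CommRing R] [IsNoetherianRing R] [IsLocalRing R]
    (hng : ¬ IsGorensteinLocalRing R)
    (hm3 : (IsLocalRing.maximalIdeal R) ^ 3 = ⊥)
    (hm2 : (IsLocalRing.maximalIdeal R) ^ 2 ≠ ⊥)
    (hex : ∃ M : ModuleCat R, Module.Finite R M ∧ GDimZero R M ∧ ¬ Module.Free R M) :
    ∃ r : ℕ, typeLen R = (r : ℕ∞) ∧
      mlength R ((↥(IsLocalRing.maximalIdeal R)) ⧸
        (Submodule.comap (IsLocalRing.maximalIdeal R).subtype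
          ((IsLocalRing.maximalIdeal R) ^ 2))) = ((r + 1 : ℕ) : ℕ∞) ∧
      mlength R (↥((IsLocalRing.maximalIdeal R) ^ 2)) = (r : ℕ∞) := by
  obtain ⟨M, hfin, ⟨hbij, hext, hext_dual⟩, hfree⟩ := hex
  have hM : IsWeaklyTotallyReflexive R M := ⟨hfin, ⟨hbij⟩, hext 1 one_pos, hext_dual 1 one_pos⟩
  have hinj : ¬ Module.Injective R R := fun _ ↦ hng (isGorensteinLocalRing_of_injective R)
  obtain ⟨r, htype, hcot, hsq⟩ := stmt_5_general hinj hm3 hm2 hM hfree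
  simp only [typeLen, mlength, ← Module.coe_length]
  exact ⟨r, congrArg _ htype, congrArg _ hcot, congrArg _ hsq⟩
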